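/- Let N ≥ 1 be an integer, let m_{ij} ∈ ℝ for 1 ≤ i, j ≤ N+1 with m_{ij} = m_{ji}, and let ℒ_N be the 2(N+1)×2(N+1) real matrix composed of 2×2 blocks (A_{ij})_{1≤i,j≤N+1} where A_{ii} has rows (1,0), (m_{ii}, N+1), and for i ≠ j, A_{ij} has rows (0,0), (m_{ij}, 0). Let a, a', b₁, b₁', …, b_N, b_N', c, c' ∈ ℂ and suppose ℒ_N · (a, a', b₁, b₁', …, b_N, b_N')ᵀ = (c, c', c, c', …, c, c')ᵀ (the pair (c, c') repeated N+1 times). Then a = c and b_j = c for all j = 1, …, N, and c' − a' = Σ_{j=1}^{N} b_j' + Z·a, where Z = (1/(N+1))·Σ_{i,j=1}^{N+1} m_{ij}. -/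

import Mathlib

open Matrix

/-- The 2×2 block `A_{ij}` of the matrix `ℒ_N` of Example 5.8: `A_{ii}` has rows
`(1,0)`, `(m_{ii}, N+1)` and, for `i ≠ j`, `A_{ij}` has rows `(0,0)`, `(m_{ij}, 0)`. -/
noncomputable def deltaBlock (N : ℕ) (m : Fin (N + 1) → Fin (N + 1) → ℝ)
    (i j : Fin (N + 1)) : Matrix (Fin 2) (Fin 2) ℂ :=
  if i = j then !![1, 0; (m i i : ℂ), ((N : ℂ) + 1)] else !![0, 0; (m i j : ℂ), 0]

/-- Boundary-data vector `(a, a', b₁, b₁', …, b_N, b_N')` indexed by `Fin 2 × Fin (N+1)`,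
where the component `(e, i)` is the value (`e = 0`) or derivative (`e = 1`) at block `i`. -/
noncomputable def bdryVec (N : ℕ) (a a' : ℂ) (b b' : Fin N → ℂ) :
    Fin 2 × Fin (N + 1) → ℂ := fun p =>
  if h : p.2 = 0 then (if p.1 = 0 then a else a')
  else (if p.1 = 0 then b (p.2.pred h) else b' (p.2.pred h))

/-!
Listing all values before all derivatives turns `ℒ_N` into the block lower triangular matrix with
diagonal blocks `1` and `N + 1` and lower left block `(m i j)`. The value rows then say that every
value equals `c`, and averaging the `N + 1` derivative rows gives the derivative condition, so that
`Z` arises as the average of the row sums of `m`.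
-/

section MatrixEquations

variable {l m n o R : Type*}

theorem fromBlocks_one_zero_mulVec_elim_eq_iff [Fintype l] [DecidableEq l] [Fintype m]
    [NonAssocSemiring R] (C : Matrix o l R) (D : Matrix o m R) (u x : l → R) (w : m → R)
    (y : o → R) :
    fromBlocks 1 0 C D *ᵥ Sum.elim u w = Sum.elim x y ↔ u = x ∧ C *ᵥ u + D *ᵥ w = y := by
  simp only [fromBlocks_mulVec, Sum.elim_comp_inl, Sum.elim_comp_inr, one_mulVec, zero_mulVec,
    add_zero, Sum.elim_eq_iff]

theorem submatrix_mulVec_comp_eq_comp_iff [Fintype n] [Fintype o] [NonUnitalNonAssocSemiring R]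
    (M : Matrix m n R) (v : n → R) (w : m → R) {f : l → m} (hf : f.Surjective) (e : o ≃ n) :
    M.submatrix f e *ᵥ (v ∘ e) = w ∘ f ↔ M *ᵥ v = w := by
  rw [submatrix_mulVec_equiv, Function.comp_assoc, e.self_comp_symm, Function.comp_id,
    hf.injective_comp_right.eq_iff]

theorem sum_sum_mul_add_mul_sum_eq_card_mul [Fintype m] [Fintype n] [NonAssocSemiring R]
    {A : Matrix m n R} {c c' k : R} {w : m → R}
    (h : A *ᵥ Function.const n c + k • w = Function.const m c') :
    (∑ i, ∑ j, A i j) * c + k * ∑ i, w i = Fintype.card m * c' :=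
  calc
    (∑ i, ∑ j, A i j) * c + k * ∑ i, w i
    _ = ∑ i, (A *ᵥ Function.const n c + k • w) i := by
      simp only [mulVec, dotProduct, Function.const_apply, Pi.add_apply, Pi.smul_apply,
        smul_eq_mul, Finset.sum_add_distrib, Finset.sum_mul, Finset.mul_sum]
    _ = Fintype.card m * c' := by
      simp only [h, Function.const_apply, Finset.sum_const, Finset.card_univ, nsmul_eq_mul]

end MatrixEquations

theorem deltaN_boundary_conditions_general {N : ℕ} {K : Type*} [Field K] (hN : (N : K) + 1 ≠ 0)
    (m : Matrix (Fin (N + 1)) (Fin (N + 1)) K) (a a' c c' : K) (b b' : Fin N → K)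
    (h : fromBlocks (1 : Matrix (Fin (N + 1)) (Fin (N + 1)) K) 0 m ((N + 1 : ℕ) : Matrix _ _ K) *ᵥ
        Sum.elim (vecCons a b) (vecCons a' b') =
      Sum.elim (Function.const _ c) (Function.const _ c')) :
    a = c ∧ (∀ j, b j = c) ∧ c' - a' = ∑ j, b' j + (∑ i, ∑ j, m i j) / (N + 1) * a := by
  obtain ⟨hvalue, hderiv⟩ := (fromBlocks_one_zero_mulVec_elim_eq_iff ..).1 h
  rw [hvalue, natCast_mulVec] at hderiv
  obtain rfl : a = c := congrFun hvalue 0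
  refine ⟨rfl, fun j => congrFun hvalue j.succ, ?_⟩
  have hsum : (∑ i, ∑ j, m i j) * a + (N + 1) * (a' + ∑ j, b' j) = (N + 1) * c' := by
    simpa only [Fin.sum_univ_succ (vecCons a' b'), cons_val_zero, cons_val_succ, Fintype.card_fin,
      Nat.cast_add_one] using sum_sum_mul_add_mul_sum_eq_card_mul hderiv
  field_simp
  linear_combination -hsum

/-- The regrouping of boundary data that lists all values (`Sum.inl`) before all derivatives
(`Sum.inr`), used to bring `ℒ_N` to block lower triangular form. The first component of the domain
follows the convention of `bdryVec`: `0` for a value, `1` for a derivative. -/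
def valueDerivEquiv (ι : Type*) : Fin 2 × ι ≃ ι ⊕ ι :=
  (finTwoEquiv.prodCongr (Equiv.refl ι)).trans (Equiv.boolProdEquivSum ι)

@[simp]
theorem valueDerivEquiv_zero {ι : Type*} (i : ι) : valueDerivEquiv ι (0, i) = Sum.inl i := rfl

@[simp]
theorem valueDerivEquiv_one {ι : Type*} (i : ι) : valueDerivEquiv ι (1, i) = Sum.inr i := rfl

theorem bdryVec_eq_elim_comp (N : ℕ) (a a' : ℂ) (b b' : Fin N → ℂ) :
    bdryVec N a a' b b' =
      Sum.elim (vecCons a b) (vecCons a' b') ∘ valueDerivEquiv (Fin (N + 1)) := by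
  ext ⟨e, i⟩
  fin_cases e <;> cases i using Fin.cases <;> simp [bdryVec]

theorem bdryVec_const (N : ℕ) (c c' : ℂ) :
    bdryVec N c c' (fun _ => c) (fun _ => c') =
      Sum.elim (Function.const _ c) (Function.const _ c') ∘ valueDerivEquiv (Fin (N + 1)) := by
  ext ⟨e, i⟩
  fin_cases e <;> simp [bdryVec]

theorem deltaBlock_eq_submatrix_fromBlocks (N : ℕ) (m : Fin (N + 1) → Fin (N + 1) → ℝ) :
    (fun p q => deltaBlock N m p.2 q.2 p.1 q.1) =
      (fromBlocks 1 0 (of fun i j => (m i j : ℂ)) ((N + 1 : ℕ) : Matrix _ _ ℂ)).submatrix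
        (valueDerivEquiv (Fin (N + 1))) (valueDerivEquiv (Fin (N + 1))) := by
  ext ⟨e, i⟩ ⟨f, j⟩
  fin_cases e <;> fin_cases f <;> by_cases hij : i = j <;>
    simp [deltaBlock, hij, Matrix.natCast_apply]

theorem deltaBlock_mulVec_bdryVec_eq_bdryVec_const_iff (N : ℕ)
    (m : Fin (N + 1) → Fin (N + 1) → ℝ) (a a' c c' : ℂ) (b b' : Fin N → ℂ) :
    mulVec (fun p q => deltaBlock N m p.2 q.2 p.1 q.1) (bdryVec N a a' b b') =
        bdryVec N c c' (fun _ => c) (fun _ => c') ↔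
      fromBlocks (1 : Matrix (Fin (N + 1)) (Fin (N + 1)) ℂ) 0 (of fun i j => (m i j : ℂ))
          ((N + 1 : ℕ) : Matrix _ _ ℂ) *ᵥ
          Sum.elim (vecCons a b) (vecCons a' b') =
        Sum.elim (Function.const _ c) (Function.const _ c') := by
  rw [deltaBlock_eq_submatrix_fromBlocks, bdryVec_eq_elim_comp, bdryVec_const,
    submatrix_mulVec_comp_eq_comp_iff _ _ _ (Equiv.surjective _)]

/-- Example 5.8 (boundary-condition computation): if `ℒ_N · (a,a',b₁,b₁',…,b_N,b_N')ᵀ`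
equals `(c,c',…,c,c')ᵀ`, then `a = c`, `b_j = c` for all `j`, and
`c' − a' = ∑_j b_j' + Z a` with `Z = (1/(N+1)) ∑_{i,j} m_{ij}`. -/
theorem deltaN_boundary_conditions (N : ℕ) (hN : 1 ≤ N)
    (m : Fin (N + 1) → Fin (N + 1) → ℝ) (hm : ∀ i j, m i j = m j i)
    (LN : Matrix (Fin 2 × Fin (N + 1)) (Fin 2 × Fin (N + 1)) ℂ)
    (hLN : LN = fun p q => deltaBlock N m p.2 q.2 p.1 q.1)
    (a a' c c' : ℂ) (b b' : Fin N → ℂ)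
    (h : LN.mulVec (bdryVec N a a' b b')
        = bdryVec N c c' (fun _ => c) (fun _ => c')) :
    a = c ∧ (∀ j : Fin N, b j = c) ∧
      c' - a' = (∑ j : Fin N, b' j)
        + (((∑ i : Fin (N + 1), ∑ j : Fin (N + 1), m i j) / (N + 1) : ℝ) : ℂ) * a := by
  rw [hLN, deltaBlock_mulVec_bdryVec_eq_bdryVec_const_iff] at h
  simpa using deltaN_boundary_conditions_general (Nat.cast_add_one_ne_zero N) _ _ _ _ _ _ _ h
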